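/- Let D be an ADF and let v and w be two strongly admissible interpretations of D. Then there is no argument a with v(a) = t and w(a) = f; consequently v and w agree on every argument to which both assign a value in {t, f}, and the join v ⊔_i w is a well-defined interpretation. -/

import Mathlib

/-!
If `v` justified accepting `a` via parents `P` while `w` justified denying it via parents `Q`,
then by induction on the first justification `v` and `w` agree on `P ∩ Q`. The join of `v|_P` and
`w|_Q` therefore extends both, and on any of its two-valued completions the acceptance condition
of `a` would be both true and false.
-/

/-- Three truth values: true, false, undecided. -/
inductive TV : Type
  | t | f | u
deriving DecidableEq, Repr

/-- The information order on truth values: u <_i t and u <_i f. -/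
def TV.ile (x y : TV) : Prop := x = TV.u ∨ x = y

/-- The information order on interpretations, extended pointwise. -/
def ILE {A : Type*} (v w : A → TV) : Prop := ∀ a, TV.ile (v a) (w a)

/-- An abstract dialectical framework on a set of arguments `A`:
each argument `a` has an acceptance condition `C a : (A → Bool) → Bool`. -/
structure ADF (A : Type*) where
  C : A → (A → Bool) → Bool

/-- The trivial interpretation mapping every argument to undecided. -/
def trivialInterp (A : Type*) : A → TV := fun _ => TV.u

/-- The parents of `a` are the arguments on which its acceptance condition depends. -/
def ADF.parents {A : Type*} [DecidableEq A] (D : ADF A) (a : A) : Set A :=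
  {b | ∃ w : A → Bool, D.C a w ≠ D.C a (Function.update w b (!w b))}

/-- A two-valued assignment `w` completes a three-valued interpretation `v`. -/
def Completes {A : Type*} (w : A → Bool) (v : A → TV) : Prop :=
  ∀ b, (v b = TV.t → w b = true) ∧ (v b = TV.f → w b = false)

/-- `φ` is irrefutable under `v`: every completion of `v` makes `φ` true. -/
def Irrefutable {A : Type*} (φ : (A → Bool) → Bool) (v : A → TV) : Prop :=
  ∀ w : A → Bool, Completes w v → φ w = true

/-- `φ` is unsatisfiable under `v`: every completion of `v` makes `φ` false. -/
def Unsat {A : Type*} (φ : (A → Bool) → Bool) (v : A → TV) : Prop :=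
  ∀ w : A → Bool, Completes w v → φ w = false

open Classical in
/-- The characteristic operator Γ_D of an ADF. -/
noncomputable def Gamma {A : Type*} (D : ADF A) (v : A → TV) : A → TV := fun a =>
  if Irrefutable (D.C a) v then TV.t
  else if Unsat (D.C a) v then TV.f
  else TV.u

open Classical in
/-- `v|_P`: agrees with `v` on `P` and is undecided elsewhere. -/
noncomputable def restrictTV {A : Type*} (v : A → TV) (P : Set A) : A → TV :=
  fun b => if b ∈ P then v b else TV.u

/-- Strong acceptability/deniability of an argument with respect to interpretation `v`
and set `S`, relative to an excluded set `E` (the first index). An argument `a` with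
`v a = t` (resp. `v a = f`) is strongly acceptable (resp. strongly deniable) iff there is
`P ⊆ (parents a ∩ S) \ E` with `φ_a^{v|_P}` irrefutable (resp. unsatisfiable) and every
`p ∈ P` strongly acceptable/deniable relative to `E ∪ {p}`. -/
inductive SJrel {A : Type*} [DecidableEq A] (D : ADF A) (v : A → TV) (S : Set A) :
    Set A → A → Prop
  | acc (E : Set A) (a : A) (P : Set A)
      (ha : v a = TV.t)
      (hP : P ⊆ (D.parents a ∩ S) \ E)
      (hirr : Irrefutable (D.C a) (restrictTV v P))
      (hrec : ∀ p ∈ P, SJrel D v S (E ∪ {p}) p) : SJrel D v S E a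
  | den (E : Set A) (a : A) (P : Set A)
      (ha : v a = TV.f)
      (hP : P ⊆ (D.parents a ∩ S) \ E)
      (hunsat : Unsat (D.C a) (restrictTV v P))
      (hrec : ∀ p ∈ P, SJrel D v S (E ∪ {p}) p) : SJrel D v S E a

/-- `a` is strongly acceptable/deniable w.r.t. `v` and `S`
(i.e., relative to the excluded set `{a}`). -/
def StronglyJustified {A : Type*} [DecidableEq A] (D : ADF A) (v : A → TV)
    (S : Set A) (a : A) : Prop :=
  SJrel D v S {a} a

/-- `S` is a least set for `a` with respect to `v`. -/
def LeastSet {A : Type*} [DecidableEq A] (D : ADF A) (v : A → TV)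
    (a : A) (S : Set A) : Prop :=
  StronglyJustified D v S a ∧
  ∀ S' : Set A, S'.ncard < S.ncard → ¬ StronglyJustified D v S' a

/-- An interpretation is strongly admissible iff every argument assigned `t`/`f`
is strongly acceptable/deniable w.r.t. `v` and some set `S`. -/
def StronglyAdmissible {A : Type*} [DecidableEq A] (D : ADF A) (v : A → TV) : Prop :=
  ∀ a : A, v a ≠ TV.u → ∃ S : Set A, StronglyJustified D v S a

/-- `g` is the grounded interpretation of `D`: the least fixed point of `Γ_D`. -/
def IsGrounded {A : Type*} (D : ADF A) (g : A → TV) : Prop :=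
  Gamma D g = g ∧ ∀ w : A → TV, Gamma D w = w → ILE g w

/-- An interpretation is admissible iff `v ≤_i Γ_D(v)`. -/
def Admissible {A : Type*} (D : ADF A) (v : A → TV) : Prop :=
  ILE v (Gamma D v)

/-- An interpretation is conflict-free. -/
def ConflictFree {A : Type*} (D : ADF A) (v : A → TV) : Prop :=
  ∀ a : A, (v a = TV.t → ∃ w : A → Bool, Completes w v ∧ D.C a w = true) ∧
           (v a = TV.f → Unsat (D.C a) v)

/-- The join of two interpretations: take `v`'s value where defined, else `w`'s. -/
def joinI {A : Type*} (v w : A → TV) : A → TV :=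
  fun a => if v a = TV.u then w a else v a

section Compatible

variable {A : Type*} {v w : A → TV}

/-- Compatibility of interpretations: they agree wherever both are defined. Together with
`ile_joinI_left` and `Compatible.ile_joinI_right`, this is the sense in which the join `joinI v w`,
which prefers the values of `v`, is well defined. -/
def Compatible (v w : A → TV) : Prop :=
  ∀ a, v a ≠ TV.u → w a ≠ TV.u → v a = w a

theorem Compatible.symm (h : Compatible v w) : Compatible w v :=
  fun a hw hv => (h a hv hw).symm

theorem compatible_restrictTV {P Q : Set A} (h : Set.EqOn v w (P ∩ Q)) :
    Compatible (restrictTV v P) (restrictTV w Q) := by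
  intro a hv hw
  have hP : a ∈ P := by_contra fun hP => hv (if_neg hP)
  have hQ : a ∈ Q := by_contra fun hQ => hw (if_neg hQ)
  simpa only [restrictTV, if_pos hP, if_pos hQ] using h ⟨hP, hQ⟩

theorem ile_joinI_left (v w : A → TV) : ILE v (joinI v w) := fun a =>
  (eq_or_ne (v a) TV.u).imp_right fun hv => (if_neg hv).symm

theorem Compatible.ile_joinI_right (h : Compatible v w) : ILE w (joinI v w) := by
  intro a
  by_cases hv : v a = TV.u
  · exact Or.inr (if_pos hv).symm
  · exact (eq_or_ne (w a) TV.u).imp_right fun hw => (h a hv hw).symm.trans (if_neg hv).symm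

theorem exists_completes (v : A → TV) : ∃ c, Completes c v :=
  ⟨fun a => decide (v a = TV.t), fun a => by simp +contextual⟩

theorem Completes.anti {c : A → Bool} (hc : Completes c w) (h : ILE v w) : Completes c v := by
  intro a
  rcases h a with hu | heq
  · simp [hu]
  · exact heq ▸ hc a

theorem Compatible.exists_common_completion (h : Compatible v w) :
    ∃ c, Completes c v ∧ Completes c w := by
  obtain ⟨c, hc⟩ := exists_completes (joinI v w)
  exact ⟨c, hc.anti (ile_joinI_left v w), hc.anti h.ile_joinI_right⟩

theorem Irrefutable.not_unsat {φ : (A → Bool) → Bool} (hφ : Irrefutable φ v)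
    (h : Compatible v w) : ¬ Unsat φ w := by
  intro hunsat
  obtain ⟨c, hcv, hcw⟩ := h.exists_common_completion
  exact Bool.false_ne_true ((hunsat c hcw).symm.trans (hφ c hcv))

end Compatible

section StronglyAdmissible

variable {A : Type*} [DecidableEq A] {D : ADF A} {v w : A → TV}

theorem SJrel.eq {S S' E E' : Set A} {a : A} (hv : SJrel D v S E a)
    (hw : SJrel D w S' E' a) : v a = w a := by
  induction hv generalizing E' with
  | acc _ a P hva _ hirr _ ih =>
    cases hw with
    | acc _ _ _ hwa => exact hva.trans hwa.symm
    | den _ _ Q _ _ hunsat hrec =>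
      have hPQ : Set.EqOn v w (P ∩ Q) := fun p hp => ih p hp.1 (hrec p hp.2)
      exact absurd hunsat (hirr.not_unsat (compatible_restrictTV hPQ))
  | den _ a P hva _ hunsat _ ih =>
    cases hw with
    | acc _ _ Q _ _ hirr hrec =>
      have hPQ : Set.EqOn v w (P ∩ Q) := fun p hp => ih p hp.1 (hrec p hp.2)
      exact absurd hunsat (hirr.not_unsat (compatible_restrictTV hPQ).symm)
    | den _ _ _ hwa => exact hva.trans hwa.symm

theorem StronglyAdmissible.compatible (hv : StronglyAdmissible D v)
    (hw : StronglyAdmissible D w) : Compatible v w := by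
  intro a hva hwa
  obtain ⟨S, hS⟩ := hv a hva
  obtain ⟨S', hS'⟩ := hw a hwa
  exact SJrel.eq hS hS'

end StronglyAdmissible

theorem strongly_admissible_compatible_general {A : Type*} [DecidableEq A]
    (D : ADF A) (v w : A → TV)
    (hv : StronglyAdmissible D v) (hw : StronglyAdmissible D w) :
    (∀ a : A, ¬ (v a = TV.t ∧ w a = TV.f)) ∧
      (∀ a : A, v a ≠ TV.u → w a ≠ TV.u → v a = w a) := by
  have hcompat : Compatible v w := hv.compatible hw
  refine ⟨?_, hcompat⟩
  rintro a ⟨hva, hwa⟩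
  have heq : v a = w a := hcompat a (by simp [hva]) (by simp [hwa])
  simp [hva, hwa] at heq

/-- Two strongly admissible interpretations never assign opposite
defined values to an argument; hence they agree wherever both are defined and
the join is well-defined. -/
theorem strongly_admissible_compatible {A : Type*} [Fintype A] [DecidableEq A]
    (D : ADF A) (v w : A → TV)
    (hv : StronglyAdmissible D v) (hw : StronglyAdmissible D w) :
    (∀ a : A, ¬ (v a = TV.t ∧ w a = TV.f)) ∧
      (∀ a : A, v a ≠ TV.u → w a ≠ TV.u → v a = w a) :=
  strongly_admissible_compatible_general D v w hv hw
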